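/- arXiv:2306.01450 — 2 statements merged into one kernel-verified Lean document; each statement's English description precedes it below -/
import Mathlib

section
/- Let D ≥ 1 be an integer, t > 0, λ > 0, and p_0, …, p_D > 0 reals. Let Δ = {x = (x_1,…,x_D) ∈ ℝ^D : x_i > 0 for all i and x_1 + ⋯ + x_D < t}, and for x ∈ Δ write x_0 = t − (x_1 + ⋯ + x_D). Then the Lebesgue integral over Δ of the (pointwise convergent, nonnegative) series x ↦ Σ_{(n_0,…,n_D)} (n_0+⋯+n_D)! ∏_{h=0}^{D} (λ p_h)^{n_h} x_h^{n_h − 1} / ((n_h − 1)! n_h!), where the sum ranges over all (D+1)-tuples of positive integers n_0,…,n_D ≥ 1, equals λ · Σ_{h=0}^{D} p_h e^{λ t p_h} ∏_{j=0, j≠h}^{D} (e^{λ t p_j} − 1). -/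
/-!
Write `w h = l * p h` and let `n h` range over the positive integers. By Dirichlet's integral, the
simplex integral of `∏ h, x h ^ (n h - 1) / (n h - 1)!` is `t ^ (N - 1) / (N - 1)!` with
`N = ∑ h, n h`, because the kernels `s ^ (a - 1) / Γ a` on `(0, ∞)` form a convolution semigroup in
`a`. Hence the `n`-th term of the series integrates to `N * t ^ (N - 1) * ∏ h, w h ^ n h / (n h)!`,
the derivative in `t` of `∏ h, (t * w h) ^ n h / (n h)!`. These products sum to
`∏ h, (exp (t * w h) - 1)`, whose derivative is the right-hand side. Expanding each derivative by
the Leibniz rule before summing avoids differentiating the series; absolute convergence, that is,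
the same sum with `|w h|` in place of `w h`, justifies integrating it term by term.
-/

open MeasureTheory ProbabilityTheory Finset
open scoped Nat ENNReal

section MultiIndexSums

variable {R : Type*} [NormedCommRing R]

theorem summable_norm_prod_pi {k : ℕ} {β : Fin k → Type*} {f : ∀ i, β i → R}
    (hf : ∀ i, Summable fun b => ‖f i b‖) :
    Summable fun n : ∀ i, β i => ‖∏ i, f i (n i)‖ := by
  induction k with
  | zero => exact Summable.of_finite
  | succ k ih =>
    rw [← (Fin.consEquiv β).summable_iff]
    refine ((hf 0).mul_norm (ih (f := fun i => f i.succ) fun i => hf i.succ)).congr fun z => ?_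
    simp [Fin.prod_univ_succ, Fin.consEquiv]

theorem hasSum_prod_pi [CompleteSpace R] {k : ℕ} {β : Fin k → Type*} {f : ∀ i, β i → R}
    {a : Fin k → R} (hf : ∀ i, Summable fun b => ‖f i b‖) (ha : ∀ i, HasSum (f i) (a i)) :
    HasSum (fun n : ∀ i, β i => ∏ i, f i (n i)) (∏ i, a i) := by
  induction k with
  | zero => simp
  | succ k ih =>
    have htail := ih (f := fun i => f i.succ) (a := fun i => a i.succ) (fun i => hf i.succ)
      fun i => ha i.succ
    have htail_norm := summable_norm_prod_pi (f := fun i => f i.succ) fun i => hf i.succ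
    have hsummable := ((hf 0).mul_norm htail_norm).of_norm
    rw [Fin.prod_univ_succ, ← (Fin.consEquiv β).hasSum_iff]
    refine ((ha 0).mul htail hsummable).congr_fun fun z => ?_
    simp [Fin.prod_univ_succ, Fin.consEquiv]

theorem hasSum_mul_prod_erase_pi [CompleteSpace R] {k : ℕ} {β : Fin k → Type*}
    {f g : ∀ i, β i → R} {a b : Fin k → R}
    (hf : ∀ i, Summable fun c => ‖f i c‖) (hg : ∀ i, Summable fun c => ‖g i c‖)
    (ha : ∀ i, HasSum (f i) (a i)) (hb : ∀ i, HasSum (g i) (b i)) (h : Fin k) :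
    HasSum (fun n : ∀ i, β i => g h (n h) * ∏ j ∈ univ.erase h, f j (n j))
      (b h * ∏ j ∈ univ.erase h, a j) := by
  have hsum := hasSum_prod_pi (f := Function.update f h (g h)) (a := Function.update a h (b h))
    (fun i => by obtain rfl | hi := eq_or_ne i h <;> simp [*])
    (fun i => by obtain rfl | hi := eq_or_ne i h <;> simp [*])
  rw [prod_update_of_mem (mem_univ h), sdiff_singleton_eq_erase] at hsum
  refine hsum.congr_fun fun n => ?_
  rw [← mul_prod_erase _ _ (mem_univ h), Function.update_self]
  congr 1
  exact prod_congr rfl fun j hj => by rw [Function.update_of_ne (ne_of_mem_erase hj)]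

end MultiIndexSums

theorem hasSum_pow_div_factorial (x : ℝ) : HasSum (fun n : ℕ => x ^ n / n !) (Real.exp x) := by
  rw [Real.exp_eq_exp_ℝ]
  exact NormedSpace.expSeries_div_hasSum_exp x

theorem hasSum_exp_sub_one (x : ℝ) :
    HasSum (fun n : ℕ => x ^ (n + 1) / (n + 1)!) (Real.exp x - 1) := by
  simpa using (hasSum_nat_add_iff' 1).2 (hasSum_pow_div_factorial x)

theorem factorial_sum_le_card_pow_mul_prod_factorial {ι : Type*} [Fintype ι] (n : ι → ℕ) :
    (∑ i, n i)! ≤ Fintype.card ι ^ (∑ i, n i) * ∏ i, (n i)! := by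
  classical
  -- The multinomial coefficient is one term of the expansion of `(1 + ⋯ + 1) ^ ∑ i, n i`.
  have hmultinomial : Nat.multinomial univ n ≤ Fintype.card ι ^ (∑ i, n i) := by
    have hsum := sum_pow_eq_sum_piAntidiag (univ : Finset ι) (fun _ => (1 : ℕ)) (∑ i, n i)
    simp only [sum_const, card_univ, smul_eq_mul, mul_one, one_pow, prod_const_one, Nat.cast_id]
      at hsum
    rw [hsum]
    exact single_le_sum (f := Nat.multinomial univ) (fun _ _ => Nat.zero_le _) (by simp)
  rw [← Nat.multinomial_spec, mul_comm]
  gcongr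

theorem lintegral_comp_div {t : ℝ} (ht : 0 < t) (f : ℝ → ℝ≥0∞) :
    ∫⁻ s, f (s / t) = ENNReal.ofReal t * ∫⁻ s, f s := by
  have hmap := (measurableEmbedding_mulRight₀ (inv_ne_zero ht.ne')).lintegral_map
    (μ := volume) f
  rw [Real.map_volume_mul_right (inv_ne_zero ht.ne'), inv_inv, abs_of_pos ht,
    lintegral_smul_measure, smul_eq_mul] at hmap
  simpa only [div_eq_mul_inv] using hmap.symm

/-- The function `s ^ (a - 1) / Γ a` on `(0, ∞)`, the density of the gamma distribution without its
exponential factor. It is extended by `0`, so that integrals over a simplex become convolutions over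
the whole line. -/
noncomputable def gammaKernel (a s : ℝ) : ℝ≥0∞ :=
  if 0 < s then ENNReal.ofReal (s ^ (a - 1) / Real.Gamma a) else 0

theorem gammaKernel_of_pos {a s : ℝ} (hs : 0 < s) :
    gammaKernel a s = ENNReal.ofReal (s ^ (a - 1) / Real.Gamma a) :=
  if_pos hs

theorem gammaKernel_of_nonpos {a s : ℝ} (hs : s ≤ 0) : gammaKernel a s = 0 :=
  if_neg hs.not_gt

@[fun_prop]
theorem measurable_gammaKernel (a : ℝ) : Measurable (gammaKernel a) :=
  Measurable.ite measurableSet_Ioi (by fun_prop) measurable_const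

theorem gammaKernel_mul_gammaKernel_sub {a b t : ℝ} (ha : 0 < a) (hb : 0 < b) (ht : 0 < t)
    (s : ℝ) :
    gammaKernel a s * gammaKernel b (t - s) =
      ENNReal.ofReal t⁻¹ * gammaKernel (a + b) t * betaPDF a b (s / t) := by
  obtain hs | hs := le_or_gt s 0
  · rw [gammaKernel_of_nonpos hs, zero_mul,
      betaPDF_eq_zero_of_nonpos (div_nonpos_of_nonpos_of_nonneg hs ht.le), mul_zero]
  obtain hts | hst := le_or_gt t s
  · rw [gammaKernel_of_nonpos (sub_nonpos.2 hts), mul_zero,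
      betaPDF_eq_zero_of_one_le ((one_le_div ht).2 hts), mul_zero]
  have hts : 0 < t - s := sub_pos.2 hst
  have : 0 < Real.Gamma a := Real.Gamma_pos_of_pos ha
  have : 0 < Real.Gamma b := Real.Gamma_pos_of_pos hb
  have : 0 < Real.Gamma (a + b) := Real.Gamma_pos_of_pos (add_pos ha hb)
  have hpow : t ^ (a + b - 1) = t * (t ^ (a - 1) * t ^ (b - 1)) := by
    rw [show a + b - 1 = 1 + ((a - 1) + (b - 1)) by ring, Real.rpow_add ht, Real.rpow_add ht,
      Real.rpow_one]
  rw [betaPDF_of_pos_lt_one (div_pos hs ht) ((div_lt_one ht).2 hst),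
    gammaKernel_of_pos hs, gammaKernel_of_pos hts, gammaKernel_of_pos ht,
    ← ENNReal.ofReal_mul (by positivity), ← ENNReal.ofReal_mul (by positivity),
    ← ENNReal.ofReal_mul (by positivity), one_sub_div ht.ne',
    Real.div_rpow hs.le ht.le, Real.div_rpow hts.le ht.le, beta, hpow]
  field_simp

theorem lintegral_gammaKernel_mul_gammaKernel_sub {a b : ℝ} (ha : 0 < a) (hb : 0 < b) (t : ℝ) :
    ∫⁻ s, gammaKernel a s * gammaKernel b (t - s) = gammaKernel (a + b) t := by
  obtain ht | ht := le_or_gt t 0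
  · have hzero (s : ℝ) : gammaKernel a s * gammaKernel b (t - s) = 0 := by
      obtain hs | hs := le_or_gt s 0
      · rw [gammaKernel_of_nonpos hs, zero_mul]
      · rw [gammaKernel_of_nonpos (by linarith : t - s ≤ 0), mul_zero]
    simp only [hzero, lintegral_zero, gammaKernel_of_nonpos ht]
  · simp_rw [gammaKernel_mul_gammaKernel_sub ha hb ht]
    rw [lintegral_const_mul _ (by unfold betaPDF; fun_prop), lintegral_comp_div ht,
      lintegral_betaPDF_eq_one ha hb, mul_one, mul_right_comm,
      ← ENNReal.ofReal_mul (inv_nonneg.2 ht.le), inv_mul_cancel₀ ht.ne', ENNReal.ofReal_one,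
      one_mul]

/-- The open simplex of size `t` in `ℝ^D`, the domain of integration. -/
def openSimplex (D : ℕ) (t : ℝ) : Set (Fin D → ℝ) :=
  {x | (∀ i, 0 < x i) ∧ ∑ i, x i < t}

/-- The `D + 1` barycentric coordinates of a point of `ℝ^D` with respect to the simplex of size `t`:
index `0` is the slack `t - ∑ i, x i`, index `i + 1` is `x i`. -/
def baryCoords {D : ℕ} (t : ℝ) (x : Fin D → ℝ) : Fin (D + 1) → ℝ :=
  Fin.cons (t - ∑ i, x i) x

theorem mem_openSimplex_iff_baryCoords_pos {D : ℕ} {t : ℝ} {x : Fin D → ℝ} :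
    x ∈ openSimplex D t ↔ ∀ h, 0 < baryCoords t x h := by
  simp [openSimplex, baryCoords, Fin.forall_fin_succ, and_comm]

@[fun_prop]
theorem measurable_baryCoords {D : ℕ} (t : ℝ) :
    Measurable (baryCoords t : (Fin D → ℝ) → Fin (D + 1) → ℝ) := by
  refine measurable_pi_lambda _ fun h => ?_
  refine Fin.cases ?_ (fun i => ?_) h
  · exact measurable_const.sub (by fun_prop)
  · exact measurable_pi_apply i

theorem measurableSet_openSimplex (D : ℕ) (t : ℝ) : MeasurableSet (openSimplex D t) := by
  have hinter : openSimplex D t = ⋂ h, {x | 0 < baryCoords t x h} := by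
    ext x
    simp only [mem_openSimplex_iff_baryCoords_pos, Set.mem_iInter, Set.mem_ofPred_eq]
  rw [hinter]
  exact MeasurableSet.iInter fun h => measurableSet_lt measurable_const (by fun_prop)

-- Fixing the first coordinate `s`, which has index `1`, leaves a simplex of size `t - s`.
theorem baryCoords_cons_succAbove_one {D : ℕ} (t s : ℝ) (y : Fin D → ℝ) (i : Fin (D + 1)) :
    baryCoords t (Fin.cons s y) (Fin.succAbove 1 i) = baryCoords (t - s) y i := by
  refine Fin.cases ?_ (fun j => ?_) i
  · simp [baryCoords, Fin.sum_univ_succ, sub_sub]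
  · simp [baryCoords, Fin.one_succAbove_succ]

theorem lintegral_eq_lintegral_lintegral_cons {D : ℕ} {f : (Fin (D + 1) → ℝ) → ℝ≥0∞}
    (hf : Measurable f) :
    ∫⁻ x, f x = ∫⁻ s, ∫⁻ y : Fin D → ℝ, f (Fin.cons s y) := by
  let e := MeasurableEquiv.piFinSuccAbove (fun _ : Fin (D + 1) => ℝ) 0
  rw [← (volume_preserving_piFinSuccAbove (fun _ : Fin (D + 1) => ℝ) 0).symm.lintegral_comp_emb
    e.symm.measurableEmbedding, Measure.volume_eq_prod,
    lintegral_prod (fun z => f (e.symm z)) (by fun_prop)]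
  simp [e, MeasurableEquiv.piFinSuccAbove_symm_apply, Fin.insertNthEquiv]

theorem lintegral_prod_gammaKernel_baryCoords {D : ℕ} {a : Fin (D + 1) → ℝ} (ha : ∀ h, 0 < a h)
    (t : ℝ) :
    ∫⁻ x : Fin D → ℝ, ∏ h, gammaKernel (a h) (baryCoords t x h) = gammaKernel (∑ h, a h) t := by
  induction D generalizing t with
  | zero => simp [Measure.volume_pi_eq_dirac 0, baryCoords]
  | succ D ih =>
    rw [lintegral_eq_lintegral_lintegral_cons (by fun_prop)]
    calc
      _ = ∫⁻ s, gammaKernel (a 1) s *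
            ∫⁻ y : Fin D → ℝ,
              ∏ i, gammaKernel (a (Fin.succAbove 1 i)) (baryCoords (t - s) y i) := by
        refine lintegral_congr fun s => ?_
        rw [← lintegral_const_mul _ (by fun_prop)]
        refine lintegral_congr fun y => ?_
        simp_rw [Fin.prod_univ_succAbove _ 1, baryCoords_cons_succAbove_one]
        simp [baryCoords]
      _ = ∫⁻ s, gammaKernel (a 1) s * gammaKernel (∑ i, a (Fin.succAbove 1 i)) (t - s) := by
        simp_rw [ih fun i => ha (Fin.succAbove 1 i)]
      _ = gammaKernel (∑ h, a h) t := by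
        rw [lintegral_gammaKernel_mul_gammaKernel_sub (ha 1)
          (sum_pos (fun i _ => ha _) univ_nonempty), ← Fin.sum_univ_succAbove a 1]

theorem setLIntegral_openSimplex_prod_rpow_div_Gamma {D : ℕ} {a : Fin (D + 1) → ℝ}
    (ha : ∀ h, 0 < a h) (t : ℝ) :
    ∫⁻ x in openSimplex D t,
      ENNReal.ofReal (∏ h, baryCoords t x h ^ (a h - 1) / Real.Gamma (a h)) =
      gammaKernel (∑ h, a h) t := by
  rw [← lintegral_indicator (measurableSet_openSimplex D t),
    ← lintegral_prod_gammaKernel_baryCoords ha]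
  refine lintegral_congr fun x => ?_
  by_cases hx : x ∈ openSimplex D t
  · have hy := mem_openSimplex_iff_baryCoords_pos.1 hx
    rw [Set.indicator_of_mem hx, ENNReal.ofReal_prod_of_nonneg fun h _ =>
      div_nonneg (Real.rpow_nonneg (hy h).le _) (Real.Gamma_pos_of_pos (ha h)).le]
    exact prod_congr rfl fun h _ => (gammaKernel_of_pos (hy h)).symm
  · obtain ⟨h, hh⟩ : ∃ h, baryCoords t x h ≤ 0 := by
      simpa only [mem_openSimplex_iff_baryCoords_pos, not_forall, not_lt] using hx
    rw [Set.indicator_of_notMem hx, prod_eq_zero (mem_univ h) (gammaKernel_of_nonpos hh)]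

section DirichletIntegral

variable {D : ℕ} {t : ℝ}

theorem ae_nonneg_prod_baryCoords_rpow_div_Gamma {a : Fin (D + 1) → ℝ} (ha : ∀ h, 0 < a h)
    (t : ℝ) :
    0 ≤ᵐ[volume.restrict (openSimplex D t)]
      fun x => ∏ h, baryCoords t x h ^ (a h - 1) / Real.Gamma (a h) := by
  filter_upwards [ae_restrict_mem (measurableSet_openSimplex D t)] with x hx
  have hy := mem_openSimplex_iff_baryCoords_pos.1 hx
  exact prod_nonneg fun h _ =>
    div_nonneg (Real.rpow_nonneg (hy h).le _) (Real.Gamma_pos_of_pos (ha h)).le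

theorem integrableOn_openSimplex_prod_rpow_div_Gamma {a : Fin (D + 1) → ℝ} (ha : ∀ h, 0 < a h)
    (t : ℝ) :
    IntegrableOn (fun x => ∏ h, baryCoords t x h ^ (a h - 1) / Real.Gamma (a h))
      (openSimplex D t) := by
  refine ⟨Measurable.aestronglyMeasurable (by fun_prop), ?_⟩
  rw [hasFiniteIntegral_iff_ofReal (ae_nonneg_prod_baryCoords_rpow_div_Gamma ha t),
    setLIntegral_openSimplex_prod_rpow_div_Gamma ha, gammaKernel]
  split_ifs
  exacts [ENNReal.ofReal_lt_top, ENNReal.zero_lt_top]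

theorem setIntegral_openSimplex_prod_rpow_div_Gamma {a : Fin (D + 1) → ℝ} (ha : ∀ h, 0 < a h)
    (ht : 0 < t) :
    ∫ x in openSimplex D t, ∏ h, baryCoords t x h ^ (a h - 1) / Real.Gamma (a h) =
      t ^ (∑ h, a h - 1) / Real.Gamma (∑ h, a h) := by
  have hΓ : 0 < Real.Gamma (∑ h, a h) :=
    Real.Gamma_pos_of_pos (sum_pos (fun h _ => ha h) univ_nonempty)
  rw [integral_eq_lintegral_of_nonneg_ae (ae_nonneg_prod_baryCoords_rpow_div_Gamma ha t)
      (Measurable.aestronglyMeasurable (by fun_prop)),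
    setLIntegral_openSimplex_prod_rpow_div_Gamma ha, gammaKernel_of_pos ht,
    ENNReal.toReal_ofReal (by positivity)]

theorem prod_pow_div_factorial_eq_prod_rpow_div_Gamma {ι : Type*} [Fintype ι] (y : ι → ℝ)
    (m : ι → ℕ) :
    ∏ h, y h ^ m h / (m h)! = ∏ h, y h ^ ((m h + 1 : ℝ) - 1) / Real.Gamma (m h + 1) := by
  simp only [add_sub_cancel_right, Real.rpow_natCast, Real.Gamma_nat_eq_factorial]

theorem integrableOn_openSimplex_prod_pow_div_factorial (m : Fin (D + 1) → ℕ) :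
    IntegrableOn (fun x => ∏ h, baryCoords t x h ^ m h / (m h)!) (openSimplex D t) := by
  simp_rw [prod_pow_div_factorial_eq_prod_rpow_div_Gamma]
  exact integrableOn_openSimplex_prod_rpow_div_Gamma (fun h => by positivity) t

theorem setIntegral_openSimplex_prod_pow_div_factorial (ht : 0 < t) (m : Fin (D + 1) → ℕ) :
    ∫ x in openSimplex D t, ∏ h, baryCoords t x h ^ m h / (m h)! =
      t ^ (∑ h, m h + D) / (∑ h, m h + D)! := by
  have hsum : ∑ h, (m h + 1 : ℝ) = (∑ h, m h + D : ℕ) + 1 := by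
    simp [sum_add_distrib, add_assoc]
  simp_rw [prod_pow_div_factorial_eq_prod_rpow_div_Gamma]
  rw [setIntegral_openSimplex_prod_rpow_div_Gamma (fun h => by positivity) ht, hsum,
    add_sub_cancel_right, Real.rpow_natCast, Real.Gamma_nat_eq_factorial]

end DirichletIntegral

/-- The term of the series at weights `w` and coordinates `y`, with the summation index `n` of the
paper written as `n h = m h + 1` so that `m` runs over all multi-indices. -/
noncomputable def seriesTerm {ι : Type*} [Fintype ι] (w y : ι → ℝ) (m : ι → ℕ) : ℝ :=
  (∑ h, (m h + 1))! *
    ∏ h, w h ^ (m h + 1) * y h ^ m h / ((m h)! * (m h + 1)!)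

section SeriesTerm

variable {ι : Type*} [Fintype ι]

theorem seriesTerm_eq_mul_prod (w y : ι → ℝ) (m : ι → ℕ) :
    seriesTerm w y m =
      ((∑ h, (m h + 1))! * ∏ h, w h ^ (m h + 1) / (m h + 1)!) * ∏ h, y h ^ m h / (m h)! := by
  rw [seriesTerm, mul_assoc, ← prod_mul_distrib]
  simp only [div_mul_div_comm, mul_comm ((_ + 1)! : ℝ)]

theorem seriesTerm_nonneg {w y : ι → ℝ} (hw : ∀ h, 0 ≤ w h) (hy : ∀ h, 0 ≤ y h) (m : ι → ℕ) :
    0 ≤ seriesTerm w y m := by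
  refine mul_nonneg (Nat.cast_nonneg _) (prod_nonneg fun h _ => ?_)
  have := hw h
  have := hy h
  positivity

theorem abs_seriesTerm (w y : ι → ℝ) (m : ι → ℕ) :
    |seriesTerm w y m| = seriesTerm (fun h => |w h|) (fun h => |y h|) m := by
  simp only [seriesTerm, abs_mul, abs_prod, abs_div, abs_pow, Nat.abs_cast]

theorem hasDerivAt_pow_succ_div_factorial (w t : ℝ) (m : ℕ) :
    HasDerivAt (fun s : ℝ => (s * w) ^ (m + 1) / (m + 1)!) (w * ((t * w) ^ m / m !)) t := by
  refine ((((hasDerivAt_id t).mul_const w).pow (m + 1)).div_const _).congr_deriv ?_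
  rw [Nat.factorial_succ]
  push_cast
  simp only [id]
  field_simp

theorem sum_mul_pow_mul_prod_eq_sum_mul_prod_erase [DecidableEq ι] (w : ι → ℝ) (t : ℝ)
    (m : ι → ℕ) :
    (∑ h, (m h + 1) : ℕ) * t ^ (∑ h, (m h + 1) - 1) * ∏ h, w h ^ (m h + 1) / (m h + 1)! =
      ∑ h, w h * ((t * w h) ^ m h / (m h)!) *
        ∏ j ∈ univ.erase h, (t * w j) ^ (m j + 1) / (m j + 1)! := by
  -- Both sides are the derivative at `t` of `∏ h, (t * w h) ^ (m h + 1) / (m h + 1)!`.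
  have hleft := (hasDerivAt_pow (∑ h, (m h + 1)) t).mul_const (∏ h, w h ^ (m h + 1) / (m h + 1)!)
  have hright := HasDerivAt.fun_finsetProd (u := univ) fun h _ =>
    hasDerivAt_pow_succ_div_factorial (w h) t (m h)
  have hfun : (fun s : ℝ => ∏ h, (s * w h) ^ (m h + 1) / (m h + 1)!) =
      fun s => s ^ (∑ h, (m h + 1)) * ∏ h, w h ^ (m h + 1) / (m h + 1)! := by
    funext s
    simp_rw [mul_pow, mul_div_assoc, prod_mul_distrib, prod_pow_eq_pow_sum]
  rw [hfun] at hright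
  simpa only [smul_eq_mul, mul_comm] using hleft.unique hright

theorem summable_seriesTerm {k : ℕ} (w y : Fin k → ℝ) : Summable (seriesTerm w y) := by
  have hbound : Summable fun m : Fin k → ℕ =>
      ‖∏ h, k * w h * ((k * w h * y h) ^ m h / (m h)!)‖ :=
    summable_norm_prod_pi (f := fun h n => k * w h * ((k * w h * y h) ^ n / n !)) fun h =>
      ((Real.summable_pow_div_factorial _).mul_left _).norm
  refine Summable.of_norm_bounded hbound fun m => ?_
  have hmultinomial : ((∑ h, (m h + 1))! : ℝ) ≤ ∏ h, ((k : ℝ) ^ (m h + 1) * (m h + 1)!) := by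
    rw [prod_mul_distrib, prod_pow_eq_pow_sum]
    exact_mod_cast Fintype.card_fin k ▸
      factorial_sum_le_card_pow_mul_prod_factorial fun h => m h + 1
  rw [seriesTerm, norm_mul, Real.norm_natCast]
  refine (mul_le_mul_of_nonneg_right hmultinomial (norm_nonneg _)).trans_eq ?_
  rw [norm_prod, norm_prod, ← prod_mul_distrib]
  refine prod_congr rfl fun h _ => ?_
  simp only [norm_mul, norm_div, norm_pow, Real.norm_natCast]
  field_simp
  ring

end SeriesTerm

section TermwiseIntegration

variable {D : ℕ} {t : ℝ}

theorem integrableOn_seriesTerm (w : Fin (D + 1) → ℝ) (m : Fin (D + 1) → ℕ) :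
    IntegrableOn (fun x => seriesTerm w (baryCoords t x) m) (openSimplex D t) := by
  simp_rw [seriesTerm_eq_mul_prod]
  exact (integrableOn_openSimplex_prod_pow_div_factorial m).const_mul _

theorem setIntegral_seriesTerm (ht : 0 < t) (w : Fin (D + 1) → ℝ) (m : Fin (D + 1) → ℕ) :
    ∫ x in openSimplex D t, seriesTerm w (baryCoords t x) m =
      ∑ h, w h * ((t * w h) ^ m h / (m h)!) *
        ∏ j ∈ univ.erase h, (t * w j) ^ (m j + 1) / (m j + 1)! := by
  have hsum : ∑ h, (m h + 1) = (∑ h, m h + D) + 1 := by simp [sum_add_distrib, add_assoc]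
  simp_rw [seriesTerm_eq_mul_prod]
  rw [integral_const_mul, setIntegral_openSimplex_prod_pow_div_factorial ht,
    ← sum_mul_pow_mul_prod_eq_sum_mul_prod_erase, hsum, Nat.add_sub_cancel, Nat.factorial_succ]
  push_cast
  field_simp

theorem hasSum_setIntegral_seriesTerm (ht : 0 < t) (w : Fin (D + 1) → ℝ) :
    HasSum (fun m => ∫ x in openSimplex D t, seriesTerm w (baryCoords t x) m)
      (∑ h, w h * Real.exp (t * w h) * ∏ j ∈ univ.erase h, (Real.exp (t * w j) - 1)) := by
  simp_rw [setIntegral_seriesTerm ht]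
  have hf (j : Fin (D + 1)) := hasSum_exp_sub_one (t * w j)
  have hg (j : Fin (D + 1)) := (hasSum_pow_div_factorial (t * w j)).mul_left (w j)
  exact hasSum_sum fun h _ => hasSum_mul_prod_erase_pi (fun j => (hf j).summable.norm)
    (fun j => (hg j).summable.norm) hf hg h

theorem summable_setIntegral_norm_seriesTerm (ht : 0 < t) (w : Fin (D + 1) → ℝ) :
    Summable fun m => ∫ x in openSimplex D t, ‖seriesTerm w (baryCoords t x) m‖ := by
  refine (hasSum_setIntegral_seriesTerm ht fun h => |w h|).summable.congr fun m => ?_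
  refine setIntegral_congr_fun (measurableSet_openSimplex D t) fun x hx => ?_
  have hy := mem_openSimplex_iff_baryCoords_pos.1 hx
  simp only [Real.norm_eq_abs, abs_seriesTerm, abs_of_pos (hy _)]

theorem setIntegral_tsum_seriesTerm (ht : 0 < t) (w : Fin (D + 1) → ℝ) :
    ∫ x in openSimplex D t, ∑' m, seriesTerm w (baryCoords t x) m =
      ∑ h, w h * Real.exp (t * w h) * ∏ j ∈ univ.erase h, (Real.exp (t * w j) - 1) := by
  rw [← integral_tsum_of_summable_integral_norm (integrableOn_seriesTerm w)
    (summable_setIntegral_norm_seriesTerm ht w)]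
  exact (hasSum_setIntegral_seriesTerm ht w).tsum_eq

end TermwiseIntegration

/-- Adding one in every coordinate, as a bijection from all multi-indices to the positive ones. -/
def addOneEquiv (ι : Type*) : (ι → ℕ) ≃ {n : ι → ℕ // ∀ i, 1 ≤ n i} where
  toFun m := ⟨fun i => m i + 1, fun i => Nat.le_add_left 1 (m i)⟩
  invFun n := fun i => n.1 i - 1
  left_inv _ := rfl
  right_inv n := Subtype.ext (funext fun i => Nat.sub_add_cancel (n.2 i))

theorem stmt14_general (D : ℕ) (t l : ℝ) (ht : 0 < t) (p : Fin (D + 1) → ℝ)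
    (Δ : Set (Fin D → ℝ))
    (hΔ : Δ = {x : Fin D → ℝ | (∀ i, 0 < x i) ∧ ∑ i, x i < t})
    (F : (Fin D → ℝ) → ℝ)
    (hF : ∀ x, F x = ∑' n : {n : Fin (D + 1) → ℕ // ∀ i, 1 ≤ n i},
      ((∑ h, n.1 h).factorial : ℝ) *
        ∏ h, (l * p h) ^ n.1 h *
          (Fin.cons (α := fun _ => ℝ) (t - ∑ i, x i) x h) ^ (n.1 h - 1) /
          (((n.1 h - 1).factorial : ℝ) * ((n.1 h).factorial : ℝ))) :
    (∀ x ∈ Δ, Summable (fun n : {n : Fin (D + 1) → ℕ // ∀ i, 1 ≤ n i} =>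
      ((∑ h, n.1 h).factorial : ℝ) *
        ∏ h, (l * p h) ^ n.1 h *
          (Fin.cons (α := fun _ => ℝ) (t - ∑ i, x i) x h) ^ (n.1 h - 1) /
          (((n.1 h - 1).factorial : ℝ) * ((n.1 h).factorial : ℝ)))) ∧
    ((∀ h, 0 ≤ l * p h) → ∀ x ∈ Δ, 0 ≤ F x) ∧
    ∫ x in Δ, F x =
      l * ∑ h : Fin (D + 1), p h * Real.exp (l * t * p h) *
        ∏ j ∈ univ.erase h, (Real.exp (l * t * p j) - 1) := by
  have hF_eq (x) : F x = ∑' m, seriesTerm (fun h => l * p h) (baryCoords t x) m :=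
    (hF x).trans ((addOneEquiv _).tsum_eq _).symm
  subst hΔ
  refine ⟨fun x _ => (addOneEquiv _).summable_iff.1 (summable_seriesTerm _ (baryCoords t x)),
    fun hw x hx => ?_, ?_⟩
  · have hy := mem_openSimplex_iff_baryCoords_pos.1 hx
    rw [hF_eq]
    exact tsum_nonneg fun m => seriesTerm_nonneg hw (fun h => (hy h).le) m
  · simp_rw [hF_eq]
    refine (setIntegral_tsum_seriesTerm ht _).trans ?_
    simp only [mul_sum, mul_assoc, mul_left_comm t l]

open MeasureTheory in
theorem stmt14 (D : ℕ) (hD : 1 ≤ D) (t l : ℝ) (ht : 0 < t) (hl : 0 < l)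
    (p : Fin (D + 1) → ℝ) (hp : ∀ i, 0 < p i)
    (Δ : Set (Fin D → ℝ))
    (hΔ : Δ = {x : Fin D → ℝ | (∀ i, 0 < x i) ∧ ∑ i, x i < t})
    (F : (Fin D → ℝ) → ℝ)
    (hF : ∀ x, F x = ∑' n : {n : Fin (D + 1) → ℕ // ∀ i, 1 ≤ n i},
      ((∑ h, n.1 h).factorial : ℝ) *
        ∏ h, (l * p h) ^ n.1 h *
          (Fin.cons (α := fun _ => ℝ) (t - ∑ i, x i) x h) ^ (n.1 h - 1) /
          (((n.1 h - 1).factorial : ℝ) * ((n.1 h).factorial : ℝ))) :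
    (∀ x ∈ Δ, Summable (fun n : {n : Fin (D + 1) → ℕ // ∀ i, 1 ≤ n i} =>
      ((∑ h, n.1 h).factorial : ℝ) *
        ∏ h, (l * p h) ^ n.1 h *
          (Fin.cons (α := fun _ => ℝ) (t - ∑ i, x i) x h) ^ (n.1 h - 1) /
          (((n.1 h - 1).factorial : ℝ) * ((n.1 h).factorial : ℝ)))) ∧
    (∀ x ∈ Δ, 0 ≤ F x) ∧
    ∫ x in Δ, F x =
      l * ∑ h : Fin (D + 1), p h * Real.exp (l * t * p h) *
        ∏ j ∈ Finset.univ.erase h, (Real.exp (l * t * p j) - 1) := by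
  obtain ⟨hsummable, hnonneg, hintegral⟩ := stmt14_general D t l ht p Δ hΔ F hF
  exact ⟨hsummable, hnonneg fun h => (mul_pos hl (hp h)).le, hintegral⟩
end

section
/- Let D ≥ 1 be an integer, λ > 0, and p_0, …, p_D > 0 reals with p_0 + ⋯ + p_D = 1. On the open set U = {(x_1,…,x_D,t) ∈ ℝ^{D+1} : x_i > 0 for all i, x_1 + ⋯ + x_D < t}, writing x_0 = t − (x_1 + ⋯ + x_D), define p(x,t) = (e^{−λt}/λ) Σ_{(n_0,…,n_D)} (n_0+⋯+n_D)! ∏_{h=0}^{D} (λ p_h)^{n_h} x_h^{n_h−1} / ((n_h−1)! n_h!), the sum ranging over all (D+1)-tuples of positive integers n_0,…,n_D ≥ 1. Then p is infinitely differentiable on U and satisfies on U the D+1-st order partial differential equation Σ_{k=0}^{D} Σ_{I} Σ_{h=0}^{D+1−k} λ^{D+1−(h+k)} [ C(D+1−k, h) − ( p_0 + Σ_{j ∈ {1,…,D}\setminus I} p_j ) C(D−k, h) ] ∂^{h+k} p / (∂t^{h} ∂x_{i_1} ⋯ ∂x_{i_k}) = 0, where for each k the middle sum ranges over all subsets I =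 {i_1 < ⋯ < i_k} ⊆ {1,…,D} of cardinality k (for k = 0, I is empty and no x-derivatives are taken), ∂^{h+k} p / (∂t^{h} ∂x_{i_1} ⋯ ∂x_{i_k}) denotes the iterated partial derivative of p taken h times in t and once in each variable x_{i_1},…,x_{i_k}, and C(a,b) is the binomial coefficient. -/
/-- Directional derivative operator in direction `v`. -/
noncomputable def dirDeriv {E : Type*} [NormedAddCommGroup E] [NormedSpace ℝ E]
    (v : E) (f : E → ℝ) : E → ℝ :=
  fun z => fderiv ℝ f z v

/-- The iterated partial derivative `∂^{h+k} f / ∂t^h ∂x_{i₁} ⋯ ∂x_{i_k}` of a function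
`f : ℝ^D × ℝ → ℝ` (first component the space variables `x`, second the time `t`),
taken once in each variable `x_i`, `i ∈ I`, and `h` times in `t`. -/
noncomputable def mixedDeriv {D : ℕ} (h : ℕ) (I : Finset (Fin D))
    (f : ((Fin D → ℝ) × ℝ) → ℝ) : ((Fin D → ℝ) × ℝ) → ℝ :=
  (dirDeriv ((0 : Fin D → ℝ), (1 : ℝ)))^[h]
    ((I.sort (· ≤ ·)).foldr (fun i g => dirDeriv (Pi.single i (1 : ℝ), (0 : ℝ)) g) f)

/-! In the coordinates `(x₀, …, x_D)` the function is `exp (-λt)` times the exponential generating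
function of the multinomial terms `(|n|! / n!) ∏ (λ pᵢ) ^ nᵢ`, shifted by `(1, …, 1)`. A partial
derivative of such a generating function shifts its coefficients, so, writing `Xᵢ` for the `i`-th
shift, `∂/∂t` acts as `X₀ - λ` and `∂/∂xᵢ` as `Xᵢ - X₀`. Under this substitution the binomial
theorem, applied first in `h` and then over the subsets `I`, collapses the differential operator to
`∏ Xᵢ - ∑ⱼ λ pⱼ ∏_{i ≠ j} Xᵢ`, which annihilates the coefficients because multinomial terms satisfy
Pascal's recurrence. -/

open Asymptotics Finset MvPolynomial

section Sequences

variable {σ : Type*} {R : ℝ}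

variable (σ R) in
/-- The multi-indexed sequences of growth `O(R ^ |m|)`, a space preserved by shifts on which
exponential generating functions converge everywhere. -/
def geomBounded : Submodule ℝ ((σ →₀ ℕ) → ℝ) where
  carrier := {c | c =O[⊤] fun m => R ^ m.degree}
  add_mem' := IsBigO.add
  zero_mem' := isBigO_zero _ _
  smul_mem' a _ hc := hc.const_mul_left a

/-- The shift `c ↦ (m ↦ c (m + u))`, which on exponential generating functions is the partial
derivative `∂^u`. -/
noncomputable def shift (u : σ →₀ ℕ) : Module.End ℝ (geomBounded σ R) where
  toFun c := ⟨fun m => c.1 (m + u), by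
    have hshift : (fun m => c.1 (m + u)) =O[⊤] fun m => R ^ u.degree * R ^ m.degree := by
      simpa only [Function.comp_def, map_add, pow_add, mul_comm] using
        IsBigO.comp_tendsto c.2 (Filter.tendsto_top (f := fun m => m + u))
    exact hshift.trans (isBigO_const_mul_self _ _ _)⟩
  map_add' _ _ := rfl
  map_smul' _ _ := rfl

/-- The representation of `ℝ[X]` on sequences in which the monomial `X ^ u` acts by `shift u`. -/
noncomputable def shiftHom : MvPolynomial σ ℝ →ₐ[ℝ] Module.End ℝ (geomBounded σ R) :=
  AddMonoidAlgebra.lift ℝ (Module.End ℝ (geomBounded σ R)) (σ →₀ ℕ)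
    { toFun := fun u => shift u.toAdd
      map_one' := by
        ext c m
        exact congrArg c.1 (add_zero m)
      map_mul' := fun u v => by
        ext c m
        exact congrArg c.1 (add_assoc m u.toAdd v.toAdd).symm }

/-- Polynomials act on sequences through shifts; on exponential generating functions this is the
action of the constant-coefficient differential operators. -/
noncomputable instance : Module (MvPolynomial σ ℝ) (geomBounded σ R) :=
  Module.compHom _ (shiftHom (σ := σ) (R := R)).toRingHom

lemma monomial_one_smul (u : σ →₀ ℕ) (c : geomBounded σ R) :
    (monomial u 1 : MvPolynomial σ ℝ) • c = shift u c :=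
  LinearMap.congr_fun ((AddMonoidAlgebra.lift_single _ u (1 : ℝ)).trans (one_smul ℝ _)) c

lemma C_smul_eq_smul (a : ℝ) (c : geomBounded σ R) : (C a : MvPolynomial σ ℝ) • c = a • c :=
  LinearMap.congr_fun ((shiftHom (σ := σ) (R := R)).commutes a) c

lemma prod_X_smul_apply (s : Finset σ) (c : geomBounded σ R) (m : σ →₀ ℕ) :
    ((∏ i ∈ s, X i : MvPolynomial σ ℝ) • c).1 m = c.1 (m + ∑ i ∈ s, Finsupp.single i 1) := by
  have hprod : (∏ i ∈ s, X i : MvPolynomial σ ℝ) = monomial (∑ i ∈ s, Finsupp.single i 1) 1 :=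
    (monomial_sum_one s _).symm
  rw [hprod, monomial_one_smul]
  rfl

end Sequences

section ExponentialSeries

variable {σ : Type*} [Fintype σ] {R : ℝ}

/-- The divided monomial `y ^ m / m! = ∏ i, y i ^ m i / (m i)!`, the basis in which exponential
generating functions are expanded. -/
noncomputable def dividedMonomial (m : σ →₀ ℕ) (y : σ → ℝ) : ℝ :=
  ∏ i, y i ^ m i / (m i).factorial

lemma dividedMonomial_smul (m : σ →₀ ℕ) (r : ℝ) (y : σ → ℝ) :
    dividedMonomial m (r • y) = r ^ m.degree * dividedMonomial m y := by
  simp only [dividedMonomial, Pi.smul_apply, smul_eq_mul, mul_pow, mul_div_assoc, prod_mul_distrib,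
    prod_pow_eq_pow_sum, Finsupp.degree_eq_sum]

lemma abs_dividedMonomial (m : σ →₀ ℕ) (y : σ → ℝ) :
    |dividedMonomial m y| = dividedMonomial m (fun i => |y i|) := by
  simp only [dividedMonomial, abs_prod, abs_div, abs_pow, Nat.abs_cast]

lemma dividedMonomial_mono (m : σ →₀ ℕ) {y z : σ → ℝ} (hy : ∀ i, 0 ≤ y i) (hyz : ∀ i, y i ≤ z i) :
    dividedMonomial m y ≤ dividedMonomial m z :=
  prod_le_prod (fun i _ => div_nonneg (pow_nonneg (hy i) _) (Nat.cast_nonneg _)) fun i _ =>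
    div_le_div_of_nonneg_right (pow_le_pow_left₀ (hy i) (hyz i) _) (Nat.cast_nonneg _)

lemma sum_prod_pow_div_factorial_le_prod_exp (s : Finset (σ → ℕ)) {y : σ → ℝ}
    (hy : ∀ i, 0 ≤ y i) :
    ∑ m ∈ s, ∏ i, y i ^ m i / (m i).factorial ≤ ∏ i, Real.exp (y i) := by
  classical
  let K : Finset ℕ := s.biUnion fun m => univ.image m
  have hterm (i : σ) (k : ℕ) : 0 ≤ y i ^ k / (k.factorial : ℝ) :=
    div_nonneg (pow_nonneg (hy i) k) (Nat.cast_nonneg _)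
  have hbox : s ⊆ Fintype.piFinset fun _ : σ => K := fun m hm =>
    Fintype.mem_piFinset.2 fun i => mem_biUnion.2 ⟨m, hm, mem_image_of_mem m (mem_univ i)⟩
  calc ∑ m ∈ s, ∏ i, y i ^ m i / ((m i).factorial : ℝ)
      ≤ ∑ m ∈ Fintype.piFinset fun _ : σ => K, ∏ i, y i ^ m i / ((m i).factorial : ℝ) :=
        sum_le_sum_of_subset_of_nonneg hbox fun m _ _ => prod_nonneg fun i _ => hterm i _
    _ = ∏ i, ∑ k ∈ K, y i ^ k / (k.factorial : ℝ) :=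
        (prod_univ_sum (fun _ => K) fun i k => y i ^ k / (k.factorial : ℝ)).symm
    _ ≤ ∏ i, Real.exp (y i) := by
        refine prod_le_prod (fun i _ => sum_nonneg fun k _ => hterm i k) fun i _ => ?_
        rw [Real.exp_eq_exp_ℝ, NormedSpace.exp_eq_tsum_div]
        exact (Real.summable_pow_div_factorial (y i)).sum_le_tsum _ fun k _ => hterm i k

lemma summable_dividedMonomial (y : σ → ℝ) :
    Summable fun m : σ →₀ ℕ => dividedMonomial m y := by
  refine Summable.of_abs ?_
  simp only [abs_dividedMonomial]
  refine (Finsupp.equivFunOnFinite (α := σ) (M := ℕ)).symm.summable_iff.1 ?_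
  exact summable_of_sum_le (fun m => prod_nonneg fun i _ => by positivity)
    fun s => sum_prod_pow_div_factorial_le_prod_exp s fun i => abs_nonneg (y i)

lemma summable_mul_dividedMonomial (c : geomBounded σ R) (y : σ → ℝ) :
    Summable fun m => c.1 m * dividedMonomial m y := by
  have hmaj : Summable fun m : σ →₀ ℕ => R ^ m.degree * dividedMonomial m y := by
    simpa only [dividedMonomial_smul] using summable_dividedMonomial (R • y)
  exact summable_of_isBigO hmaj
    ((IsBigO.mul c.2 (isBigO_refl (dividedMonomial · y) ⊤)).mono le_top)

/-- The exponential generating function `∑ c m * y ^ m / m!` of a sequence `c`. -/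
noncomputable def expGenFun : geomBounded σ R →ₗ[ℝ] (σ → ℝ) → ℝ where
  toFun c y := ∑' m, c.1 m * dividedMonomial m y
  map_add' c d := funext fun y => by
    simp only [Submodule.coe_add, Pi.add_apply, add_mul]
    exact (summable_mul_dividedMonomial c y).tsum_add (summable_mul_dividedMonomial d y)
  map_smul' a c := funext fun y => by
    simp only [Submodule.coe_smul, Pi.smul_apply, smul_eq_mul, mul_assoc, tsum_mul_left,
      RingHom.id_apply]

lemma expGenFun_apply (c : geomBounded σ R) (y : σ → ℝ) :
    expGenFun c y = ∑' m, c.1 m * dividedMonomial m y :=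
  rfl

/-- The partial derivative `∂ⱼ (y ^ m / m!)`, which is `y ^ (m - eⱼ) / (m - eⱼ)!`, or `0` when
`m j = 0`. -/
noncomputable def dividedMonomialDeriv (j : σ) (m : σ →₀ ℕ) (y : σ → ℝ) : ℝ :=
  if m j = 0 then 0 else dividedMonomial (m - Finsupp.single j 1) y

lemma succ_mul_dividedMonomial_add_single (m : σ →₀ ℕ) (j : σ) (y : σ → ℝ) :
    (m j + 1) * dividedMonomial (m + Finsupp.single j 1) y = y j * dividedMonomial m y := by
  classical
  rw [dividedMonomial, dividedMonomial, ← mul_prod_erase univ _ (mem_univ j),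
    ← mul_prod_erase univ _ (mem_univ j),
    prod_congr rfl fun i hi => by
        rw [Finsupp.add_apply, Finsupp.single_eq_of_ne (ne_of_mem_erase hi), add_zero],
    Finsupp.add_apply, Finsupp.single_eq_same, Nat.factorial_succ, pow_succ]
  push_cast
  field_simp

lemma dividedMonomialDeriv_add_single (j : σ) (m : σ →₀ ℕ) (y : σ → ℝ) :
    dividedMonomialDeriv j (m + Finsupp.single j 1) y = dividedMonomial m y := by
  simp [dividedMonomialDeriv]

lemma hasFDerivAt_dividedMonomial (m : σ →₀ ℕ) (y : σ → ℝ) :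
    HasFDerivAt (dividedMonomial m)
      (∑ j, dividedMonomialDeriv j m y • (ContinuousLinearMap.proj j : (σ → ℝ) →L[ℝ] ℝ)) y := by
  classical
  have hfactor (i : σ) : HasFDerivAt (fun y : σ → ℝ => y i ^ m i / ((m i).factorial : ℝ))
      ((m i * y i ^ (m i - 1) / ((m i).factorial : ℝ)) •
        (ContinuousLinearMap.proj i : (σ → ℝ) →L[ℝ] ℝ)) y :=
    HasDerivAt.comp_hasFDerivAt (h₂ := fun t => t ^ m i / ((m i).factorial : ℝ)) y
      ((hasDerivAt_pow (m i) (y i)).div_const _) (hasFDerivAt_apply i y)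
  refine (HasFDerivAt.finsetProd fun i _ => hfactor i).congr_fderiv (sum_congr rfl fun j _ => ?_)
  rw [smul_smul]
  congr 1
  rcases Nat.eq_zero_or_pos (m j) with hj | hj
  · simp [dividedMonomialDeriv, hj]
  · obtain ⟨n, rfl⟩ : ∃ n, m = n + Finsupp.single j 1 :=
      ⟨m - Finsupp.single j 1, (tsub_add_cancel_of_le (Finsupp.single_le_iff.2 hj)).symm⟩
    rw [dividedMonomialDeriv_add_single, dividedMonomial, ← prod_erase_mul univ _ (mem_univ j),
      prod_congr rfl fun i hi => by
        rw [Finsupp.add_apply, Finsupp.single_eq_of_ne (ne_of_mem_erase hi), add_zero],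
      Finsupp.add_apply, Finsupp.single_eq_same, Nat.factorial_succ, Nat.add_sub_cancel]
    push_cast
    field_simp

lemma hasSum_dividedMonomialDeriv (c : geomBounded σ R) (j : σ) (y : σ → ℝ) :
    HasSum (fun m => c.1 m * dividedMonomialDeriv j m y)
      (expGenFun (shift (Finsupp.single j 1) c) y) := by
  have hinj : Function.Injective fun m : σ →₀ ℕ => m + Finsupp.single j 1 := add_left_injective _
  refine (hinj.hasSum_iff fun m hm => ?_).1 ?_
  · have hmj : m j = 0 := by
      by_contra hmj
      exact hm ⟨m - Finsupp.single j 1,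
        tsub_add_cancel_of_le (Finsupp.single_le_iff.2 (Nat.pos_of_ne_zero hmj))⟩
    simp only [dividedMonomialDeriv, hmj, if_true, mul_zero]
  · simp only [Function.comp_def, dividedMonomialDeriv_add_single]
    exact (summable_mul_dividedMonomial (shift (Finsupp.single j 1) c) y).hasSum

lemma abs_dividedMonomialDeriv_le (j : σ) (m : σ →₀ ℕ) {y : σ → ℝ} {r : ℝ} (hy : ‖y‖ ≤ r) :
    |dividedMonomialDeriv j m y| ≤ |dividedMonomialDeriv j m fun _ => r| := by
  unfold dividedMonomialDeriv
  split_ifs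
  · rfl
  · rw [abs_dividedMonomial, abs_dividedMonomial]
    exact dividedMonomial_mono _ (fun i => abs_nonneg _) fun i =>
      ((norm_le_pi_norm y i).trans hy).trans (le_abs_self r)

lemma hasFDerivAt_expGenFun (c : geomBounded σ R) (y : σ → ℝ) :
    HasFDerivAt (expGenFun c)
      (∑ j, expGenFun (shift (Finsupp.single j 1) c) y •
        (ContinuousLinearMap.proj j : (σ → ℝ) →L[ℝ] ℝ)) y := by
  let r : ℝ := ‖y‖ + 1
  have hy : y ∈ Metric.ball 0 r := by simp [r]
  let u (m : σ →₀ ℕ) : ℝ := ∑ j, |c.1 m * dividedMonomialDeriv j m fun _ => r|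
  have hu : Summable u := summable_sum fun j _ => (hasSum_dividedMonomialDeriv c j _).summable.abs
  let f' (m : σ →₀ ℕ) (z : σ → ℝ) : (σ → ℝ) →L[ℝ] ℝ :=
    ∑ j, (c.1 m * dividedMonomialDeriv j m z) • ContinuousLinearMap.proj j
  have hf' (m : σ →₀ ℕ) (z : σ → ℝ) :
      HasFDerivAt (fun y => c.1 m * dividedMonomial m y) (f' m z) z := by
    refine ((hasFDerivAt_dividedMonomial m z).const_mul (c.1 m)).congr_fderiv ?_
    simp only [f', smul_sum, smul_smul]
  have hproj (j : σ) : ‖(ContinuousLinearMap.proj j : (σ → ℝ) →L[ℝ] ℝ)‖ ≤ 1 :=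
    ContinuousLinearMap.opNorm_le_bound _ zero_le_one fun v => by
      simpa using norm_le_pi_norm v j
  have hbound (m : σ →₀ ℕ) (z : σ → ℝ) (hz : z ∈ Metric.ball 0 r) : ‖f' m z‖ ≤ u m := by
    refine (norm_sum_le _ _).trans (sum_le_sum fun j _ => ?_)
    rw [norm_smul]
    refine (mul_le_of_le_one_right (norm_nonneg _) (hproj j)).trans ?_
    rw [Real.norm_eq_abs, abs_mul, abs_mul]
    exact mul_le_mul_of_nonneg_left
      (abs_dividedMonomialDeriv_le j m (mem_ball_zero_iff.1 hz).le) (abs_nonneg _)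
  refine (hasFDerivAt_tsum_of_isPreconnected hu Metric.isOpen_ball
    (convex_ball 0 r).isPreconnected (fun m z _ => hf' m z) hbound hy
    (summable_mul_dividedMonomial c y) hy).congr_fderiv ?_
  exact (hasSum_sum fun j _ => (hasSum_dividedMonomialDeriv c j y).smul_const
    (ContinuousLinearMap.proj j : (σ → ℝ) →L[ℝ] ℝ)).tsum_eq

lemma contDiff_expGenFun (c : geomBounded σ R) : ContDiff ℝ (⊤ : ℕ∞) (expGenFun c) := by
  refine contDiff_infty.2 fun n => ?_
  induction n generalizing c with
  | zero =>
    exact contDiff_zero.2 (continuous_iff_continuousAt.2 fun y =>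
      (hasFDerivAt_expGenFun c y).continuousAt)
  | succ n ih =>
    push_cast
    exact contDiff_succ_iff_hasFDerivAt.2
      ⟨_, ContDiff.sum fun j _ => (ih _).smul contDiff_const, hasFDerivAt_expGenFun c⟩

end ExponentialSeries

section TwistedSeries

variable {σ : Type*} [Fintype σ] {R : ℝ}

variable {E : Type*} [NormedAddCommGroup E] [NormedSpace ℝ E]

/-- The function `z ↦ exp (μ z) * F (T z)`, where `F` is the exponential generating function of
`c`. -/
noncomputable def twistedGenFun (μ : E →L[ℝ] ℝ) (T : E →L[ℝ] σ → ℝ) :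
    geomBounded σ R →ₗ[ℝ] E → ℝ where
  toFun c z := Real.exp (μ z) * expGenFun c (T z)
  map_add' c d := funext fun z => by simp only [map_add, Pi.add_apply, mul_add]
  map_smul' a c := funext fun z => by
    simp only [map_smul, Pi.smul_apply, smul_eq_mul, mul_left_comm, RingHom.id_apply]

variable (μ : E →L[ℝ] ℝ) (T : E →L[ℝ] σ → ℝ)

lemma twistedGenFun_apply (c : geomBounded σ R) (z : E) :
    twistedGenFun μ T c z = Real.exp (μ z) * expGenFun c (T z) :=
  rfl

lemma contDiff_twistedGenFun (c : geomBounded σ R) :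
    ContDiff ℝ (⊤ : ℕ∞) (twistedGenFun μ T c) :=
  μ.contDiff.exp.mul ((contDiff_expGenFun c).comp T.contDiff)

lemma dirDeriv_twistedGenFun (v : E) (c : geomBounded σ R) :
    dirDeriv v (twistedGenFun μ T c) =
      twistedGenFun μ T ((∑ j, C (T v j) * X j + C (μ v) : MvPolynomial σ ℝ) • c) := by
  ext z
  have hderiv : HasFDerivAt (twistedGenFun μ T c) _ z := (μ.hasFDerivAt (x := z)).exp.mul
    ((hasFDerivAt_expGenFun c (T z)).comp z T.hasFDerivAt)
  have hX (j : σ) : (X j : MvPolynomial σ ℝ) • c = shift (Finsupp.single j 1) c :=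
    monomial_one_smul _ c
  simp only [add_smul, sum_smul, mul_smul, C_smul_eq_smul, hX, twistedGenFun_apply, map_add,
    map_sum, map_smul, Pi.add_apply, Finset.sum_apply, Pi.smul_apply, smul_eq_mul]
  calc dirDeriv v (twistedGenFun μ T c) z
      = Real.exp (μ z) * ∑ j, expGenFun (shift (Finsupp.single j 1) c) (T z) * T v j +
          expGenFun c (T z) * (Real.exp (μ z) * μ v) :=
        (congrArg (· v) hderiv.fderiv).trans (by simp)
    _ = _ := by
        simp only [mul_comm (expGenFun _ (T z)) (T v _)]
        ring

end TwistedSeries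

section MixedDerivatives

lemma foldr_dirDeriv_of_intertwining {A M E ι : Type*} [Monoid A] [MulAction A M]
    [NormedAddCommGroup E] [NormedSpace ℝ E] (Φ : M → E → ℝ) (b : ι → A) (v : ι → E)
    (hb : ∀ i c, dirDeriv (v i) (Φ c) = Φ (b i • c)) (s : List ι) (c : M) :
    s.foldr (fun i g => dirDeriv (v i) g) (Φ c) = Φ ((s.map b).prod • c) := by
  induction s with
  | nil => simp
  | cons i s ih => rw [List.foldr_cons, ih, hb, List.map_cons, List.prod_cons, mul_smul]

lemma mixedDeriv_of_intertwining {A M : Type*} {D : ℕ} [CommMonoid A] [MulAction A M]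
    (Φ : M → ((Fin D → ℝ) × ℝ) → ℝ) (a : A) (b : Fin D → A)
    (ha : ∀ c, dirDeriv (0, 1) (Φ c) = Φ (a • c))
    (hb : ∀ i c, dirDeriv (Pi.single i 1, 0) (Φ c) = Φ (b i • c))
    (h : ℕ) (I : Finset (Fin D)) (c : M) :
    mixedDeriv h I (Φ c) = Φ ((a ^ h * ∏ i ∈ I, b i) • c) := by
  have hprod : ((I.sort (· ≤ ·)).map b).prod = ∏ i ∈ I, b i := by
    rw [← Multiset.prod_coe, ← Multiset.map_coe, sort_eq, prod_map_val]
  have hiter : Function.Semiconj Φ (a • ·) (dirDeriv (0, 1)) := fun c => (ha c).symm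
  rw [mixedDeriv, foldr_dirDeriv_of_intertwining Φ b _ hb, hprod, mul_smul, ← smul_iterate_apply]
  exact (hiter.iterate_right h _).symm

end MixedDerivatives

section Multinomial

variable {σ : Type*} [Fintype σ]

lemma factorial_degree_mul_dividedMonomial (n : σ →₀ ℕ) (w : σ → ℝ) :
    n.degree.factorial * dividedMonomial n w = Nat.multinomial univ n * ∏ i, w i ^ n i := by
  have hfact : (∏ i, ((n i).factorial : ℝ)) ≠ 0 :=
    prod_ne_zero_iff.2 fun i _ => Nat.cast_ne_zero.2 (n i).factorial_ne_zero
  rw [Finsupp.degree_eq_sum, ← Nat.multinomial_spec, dividedMonomial, prod_div_distrib]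
  push_cast
  field_simp

lemma abs_factorial_degree_mul_dividedMonomial_le (n : σ →₀ ℕ) (w : σ → ℝ) :
    |n.degree.factorial * dividedMonomial n w| ≤ (∑ i, |w i|) ^ n.degree := by
  classical
  rw [abs_mul, Nat.abs_cast, abs_dividedMonomial, factorial_degree_mul_dividedMonomial,
    sum_pow_eq_sum_piAntidiag]
  refine single_le_sum
    (f := fun k : σ → ℕ => (Nat.multinomial univ k : ℝ) * ∏ i, |w i| ^ k i)
    (fun k _ => by positivity) ?_
  simp [mem_piAntidiag, Finsupp.degree_eq_sum]

/-- The sequence of multinomial terms `n ↦ (|n|! / n!) * w ^ n`, the power series coefficients of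
`1 / (1 - ∑ i, w i * y i)`. -/
noncomputable def multinomialSeq (w : σ → ℝ) : geomBounded σ (∑ i, |w i|) :=
  ⟨fun n => n.degree.factorial * dividedMonomial n w, isBigO_top.2 ⟨1, fun n => by
    simpa only [one_mul, Real.norm_eq_abs] using
      (abs_factorial_degree_mul_dividedMonomial_le n w).trans (le_abs_self _)⟩⟩

lemma multinomialSeq_apply (w : σ → ℝ) (n : σ →₀ ℕ) :
    (multinomialSeq w).1 n = n.degree.factorial * dividedMonomial n w :=
  rfl

lemma multinomialSeq_eq_sum_support (w : σ → ℝ) {n : σ →₀ ℕ} (hn : n ≠ 0) :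
    (multinomialSeq w).1 n =
      ∑ j ∈ n.support, w j * (multinomialSeq w).1 (n - Finsupp.single j 1) := by
  have hterm : ∀ j ∈ n.support, w j * (multinomialSeq w).1 (n - Finsupp.single j 1) =
      n j * ((n.degree - 1).factorial * dividedMonomial n w) := by
    intro j hj
    obtain ⟨m, rfl⟩ : ∃ m, n = m + Finsupp.single j 1 :=
      ⟨n - Finsupp.single j 1, (tsub_add_cancel_of_le (Finsupp.single_le_iff.2
        (Nat.pos_of_ne_zero (Finsupp.mem_support_iff.1 hj)))).symm⟩
    rw [add_tsub_cancel_right, multinomialSeq_apply, mul_left_comm,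
      ← succ_mul_dividedMonomial_add_single, map_add, Finsupp.degree_single, Nat.add_sub_cancel,
      Finsupp.add_apply, Finsupp.single_eq_same]
    push_cast
    ring
  have hdegree : (n.degree : ℝ) * (n.degree - 1).factorial = n.degree.factorial :=
    mod_cast Nat.mul_factorial_pred ((Finsupp.degree_eq_zero_iff n).not.2 hn)
  rw [sum_congr rfl hterm, ← sum_mul, ← Nat.cast_sum, ← Finsupp.degree_apply, ← mul_assoc,
    hdegree, multinomialSeq_apply]

lemma prod_X_sub_sum_smul_multinomialSeq [Nonempty σ] [DecidableEq σ] (w : σ → ℝ) :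
    (∏ i, X i - ∑ j, C (w j) * ∏ i ∈ univ.erase j, X i : MvPolynomial σ ℝ) •
      ((∏ i, X i : MvPolynomial σ ℝ) • multinomialSeq w) = 0 := by
  ext m
  -- The shift by `e` makes all indices positive, so Pascal's recurrence runs over all of `σ`.
  let e : σ →₀ ℕ := ∑ i, Finsupp.single i 1
  let n : σ →₀ ℕ := m + e + e
  have he (i : σ) : e i = 1 := by simp [e, Finsupp.finsetSum_apply, Finsupp.single_apply]
  have hsupport : n.support = univ := by
    ext i
    simp [n, he]
  have hn : n ≠ 0 := Finsupp.support_nonempty_iff.1 (hsupport ▸ univ_nonempty)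
  have herase (j : σ) :
      m + ∑ i ∈ univ.erase j, Finsupp.single i 1 + e = n - Finsupp.single j 1 := by
    have hsplit : ∑ i ∈ univ.erase j, Finsupp.single i 1 + Finsupp.single j 1 = e :=
      sum_erase_add univ _ (mem_univ j)
    refine (tsub_eq_of_eq_add ?_).symm
    rw [add_right_comm, add_assoc m, hsplit]
  have hcoeff := multinomialSeq_eq_sum_support w hn
  rw [hsupport] at hcoeff
  simp only [sub_smul, sum_smul, mul_smul, C_smul_eq_smul, Submodule.coe_sub, Submodule.coe_sum,
    Submodule.coe_smul, Pi.sub_apply, Finset.sum_apply, Pi.smul_apply, smul_eq_mul,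
    prod_X_smul_apply]
  change (multinomialSeq w).1 n -
    ∑ j, w j * (multinomialSeq w).1 (m + ∑ i ∈ univ.erase j, Finsupp.single i 1 + e) = 0
  simp only [herase, hcoeff, sub_self]

/-- Positive multi-indices are the translates by `(1, …, 1)` of arbitrary ones. -/
noncomputable def finsuppEquivPos : (σ →₀ ℕ) ≃ {n : σ → ℕ // ∀ i, 1 ≤ n i} where
  toFun m := ⟨fun i => m i + 1, fun i => Nat.le_add_left 1 (m i)⟩
  invFun n := Finsupp.equivFunOnFinite.symm fun i => n.1 i - 1
  left_inv m := by
    ext i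
    simp
  right_inv n := Subtype.ext (funext fun i => Nat.sub_add_cancel (n.2 i))

lemma expGenFun_prod_X_smul_multinomialSeq (w y : σ → ℝ) :
    expGenFun ((∏ i, X i : MvPolynomial σ ℝ) • multinomialSeq w) y =
      ∑' n : {n : σ → ℕ // ∀ i, 1 ≤ n i}, ((∑ i, n.1 i).factorial : ℝ) *
        ∏ i, w i ^ n.1 i * y i ^ (n.1 i - 1) /
          (((n.1 i - 1).factorial : ℝ) * ((n.1 i).factorial : ℝ)) := by
  classical
  rw [← finsuppEquivPos.tsum_eq, expGenFun_apply]
  refine tsum_congr fun m => ?_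
  have hone (i : σ) : (m + ∑ j, Finsupp.single j 1 : σ →₀ ℕ) i = m i + 1 := by
    simp [Finsupp.single_apply]
  simp only [prod_X_smul_apply, multinomialSeq_apply, Finsupp.degree_eq_sum, dividedMonomial, hone,
    finsuppEquivPos, Equiv.coe_fn_mk, Nat.add_sub_cancel, mul_assoc, ← prod_mul_distrib]
  congr 1
  refine prod_congr rfl fun i _ => ?_
  rw [div_mul_div_comm, mul_comm ((m i + 1).factorial : ℝ)]

end Multinomial

section Symbol

variable {A : Type*} [CommRing A]

lemma sum_pow_mul_choose_sub_mul_choose (l s T : A) (n : ℕ) :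
    ∑ h ∈ range (n + 2), l ^ (n + 1 - h) * ((n + 1).choose h - s * n.choose h) * (T - l) ^ h =
      T ^ n * (T - l * s) := by
  have hpow (k : ℕ) : ∑ h ∈ range (k + 1), (T - l) ^ h * l ^ (k - h) * k.choose h = T ^ k := by
    rw [← add_pow, sub_add_cancel]
  have hpow' : ∑ h ∈ range (n + 2), (T - l) ^ h * l ^ (n + 1 - h) * n.choose h = l * T ^ n := by
    rw [sum_range_succ, Nat.choose_succ_self, Nat.cast_zero, mul_zero, add_zero, ← hpow n, mul_sum]
    refine sum_congr rfl fun h hh => ?_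
    rw [Nat.succ_sub (Nat.lt_succ_iff.1 (mem_range.1 hh)), pow_succ]
    ring
  calc ∑ h ∈ range (n + 2), l ^ (n + 1 - h) * ((n + 1).choose h - s * n.choose h) * (T - l) ^ h
      = ∑ h ∈ range (n + 2), (T - l) ^ h * l ^ (n + 1 - h) * (n + 1).choose h -
          s * ∑ h ∈ range (n + 2), (T - l) ^ h * l ^ (n + 1 - h) * n.choose h := by
        rw [mul_sum, ← sum_sub_distrib]
        exact sum_congr rfl fun h _ => by ring
    _ = T ^ n * (T - l * s) := by
        rw [hpow, hpow']
        ring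

lemma sum_powerset_prod_mul_prod_mul_sum_sdiff {ι : Type*} [DecidableEq ι] (S : Finset ι)
    (f g w : ι → A) :
    ∑ I ∈ S.powerset, (∏ i ∈ I, f i) * (∏ i ∈ S \ I, g i) * ∑ j ∈ S \ I, w j =
      ∑ j ∈ S, w j * (g j * ∏ i ∈ S.erase j, (f i + g i)) := by
  simp only [mul_sum, prod_add]
  rw [sum_comm' (t' := S) (s' := fun j => (S.erase j).powerset)]
  · refine sum_congr rfl fun j hj => sum_congr rfl fun I hI => ?_
    have hjI : j ∈ S \ I :=
      mem_sdiff.2 ⟨hj, fun h => notMem_erase j S (mem_powerset.1 hI h)⟩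
    rw [← mul_prod_erase _ _ hjI, erase_sdiff_comm]
    ring
  · intro I j
    simp only [mem_powerset, mem_sdiff, subset_erase]
    tauto

lemma prod_univ_erase_zero {D : ℕ} (x : Fin (D + 1) → A) :
    ∏ i ∈ univ.erase 0, x i = ∏ i : Fin D, x i.succ := by
  rw [Fin.univ_succ, erase_cons, prod_map]
  rfl

lemma prod_univ_erase_succ {D : ℕ} (x : Fin (D + 1) → A) (j : Fin D) :
    ∏ i ∈ univ.erase j.succ, x i = x 0 * ∏ i ∈ univ.erase j, x i.succ := by
  have hset : (univ : Finset (Fin (D + 1))).erase j.succ =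
      cons 0 ((univ.erase j).map (Fin.succEmb D)) (by simp) := by
    ext i
    cases i using Fin.cases <;> simp [Fin.succ_ne_zero, eq_comm]
  rw [hset, prod_cons, prod_map]
  rfl

lemma symbol_eq_prod_sub_sum {D : ℕ} (l : A) (p x : Fin (D + 1) → A) :
    ∑ k ∈ range (D + 1), ∑ I ∈ powersetCard k (univ : Finset (Fin D)), ∑ h ∈ range (D + 2 - k),
      l ^ (D + 1 - (h + k)) *
        ((D + 1 - k).choose h - (p 0 + ∑ j ∈ univ \ I, p j.succ) * (D - k).choose h) *
        ((x 0 - l) ^ h * ∏ i ∈ I, (x i.succ - x 0)) =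
      ∏ i, x i - ∑ j, l * p j * ∏ i ∈ univ.erase j, x i := by
  let F (I : Finset (Fin D)) : A := (∏ i ∈ I, (x i.succ - x 0)) * ∏ _i ∈ univ \ I, x 0
  have hinner : ∀ k ∈ range (D + 1), ∀ I ∈ powersetCard k (univ : Finset (Fin D)),
      ∑ h ∈ range (D + 2 - k), l ^ (D + 1 - (h + k)) *
        ((D + 1 - k).choose h - (p 0 + ∑ j ∈ univ \ I, p j.succ) * (D - k).choose h) *
        ((x 0 - l) ^ h * ∏ i ∈ I, (x i.succ - x 0)) =
      (x 0 - l * p 0) * F I - l * (F I * ∑ j ∈ univ \ I, p j.succ) := by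
    intro k hk I hI
    obtain ⟨n, rfl⟩ := Nat.exists_eq_add_of_le (Nat.lt_succ_iff.1 (mem_range.1 hk))
    have hcard : #(univ \ I) = n := by
      rw [card_sdiff_of_subset (subset_univ I), card_fin, (mem_powersetCard.1 hI).2,
        Nat.add_sub_cancel_left]
    have hsub (h : ℕ) : k + n + 1 - (h + k) = n + 1 - h := by omega
    rw [show k + n + 2 - k = n + 2 by omega, show k + n + 1 - k = n + 1 by omega,
      Nat.add_sub_cancel_left]
    simp only [hsub, ← mul_assoc, ← sum_mul, sum_pow_mul_choose_sub_mul_choose, F, prod_const,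
      hcard]
    ring
  have hF : ∑ I ∈ (univ : Finset (Fin D)).powerset, F I = ∏ i : Fin D, x i.succ := by
    simp only [F, ← prod_add, sub_add_cancel]
  have hFp : ∑ I ∈ (univ : Finset (Fin D)).powerset, F I * ∑ j ∈ univ \ I, p j.succ =
      ∑ j : Fin D, p j.succ * (x 0 * ∏ i ∈ univ.erase j, x i.succ) := by
    simp only [F, sum_powerset_prod_mul_prod_mul_sum_sdiff, sub_add_cancel]
  have hpowerset := sum_powerset (univ : Finset (Fin D)) fun I =>
    (x 0 - l * p 0) * F I - l * (F I * ∑ j ∈ univ \ I, p j.succ)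
  rw [card_fin] at hpowerset
  rw [sum_congr rfl fun k hk => sum_congr rfl (hinner k hk), ← hpowerset, sum_sub_distrib,
    ← mul_sum, ← mul_sum, hF, hFp, Fin.prod_univ_succ, Fin.sum_univ_succ, prod_univ_erase_zero]
  simp only [prod_univ_erase_succ, mul_assoc, ← mul_sum]
  ring

end Symbol

section SimplexCoordinates

variable {D : ℕ}

variable (D) in
/-- The coordinates `(x, t) ↦ (x₀, x₁, …, x_D)` with `x₀ = t - ∑ i, xᵢ`. -/
noncomputable def simplexCoord : ((Fin D → ℝ) × ℝ) →L[ℝ] (Fin (D + 1) → ℝ) :=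
  .pi (Fin.cons (.snd ℝ _ ℝ - ∑ i, .proj i ∘L .fst ℝ _ ℝ) fun i => .proj i ∘L .fst ℝ _ ℝ)

lemma simplexCoord_apply (z : (Fin D → ℝ) × ℝ) :
    simplexCoord D z = Fin.cons (α := fun _ => ℝ) (z.2 - ∑ i, z.1 i) z.1 := by
  ext j
  cases j using Fin.cases <;> simp [simplexCoord]

/-- The function `(x, t) ↦ exp (-l t) * F (x₀, …, x_D)`, where `F` is the exponential generating
function of `c`. -/
noncomputable def dampedGenFun {R : ℝ} (l : ℝ) :
    geomBounded (Fin (D + 1)) R →ₗ[ℝ] ((Fin D → ℝ) × ℝ) → ℝ :=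
  twistedGenFun (-(l • .snd ℝ _ ℝ)) (simplexCoord D)

variable {R : ℝ} (l : ℝ)

lemma dampedGenFun_apply (c : geomBounded (Fin (D + 1)) R) (z : (Fin D → ℝ) × ℝ) :
    dampedGenFun l c z = Real.exp (-(l * z.2)) *
      expGenFun c (Fin.cons (α := fun _ => ℝ) (z.2 - ∑ i, z.1 i) z.1) :=
  congrArg (Real.exp (-(l * z.2)) * expGenFun c ·) (simplexCoord_apply z)

lemma dirDeriv_time_dampedGenFun (c : geomBounded (Fin (D + 1)) R) :
    dirDeriv (0, 1) (dampedGenFun l c) =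
      dampedGenFun l ((X 0 - C l : MvPolynomial (Fin (D + 1)) ℝ) • c) := by
  rw [dampedGenFun, dirDeriv_twistedGenFun]
  simp [simplexCoord_apply, Fin.sum_univ_succ, sub_eq_add_neg]

lemma dirDeriv_space_dampedGenFun (i : Fin D) (c : geomBounded (Fin (D + 1)) R) :
    dirDeriv (Pi.single i 1, 0) (dampedGenFun l c) =
      dampedGenFun l ((X i.succ - X 0 : MvPolynomial (Fin (D + 1)) ℝ) • c) := by
  rw [dampedGenFun, dirDeriv_twistedGenFun]
  simp [simplexCoord_apply, Fin.sum_univ_succ, Pi.single_apply, sub_eq_neg_add]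

lemma mixedDeriv_dampedGenFun (h : ℕ) (I : Finset (Fin D)) (c : geomBounded (Fin (D + 1)) R) :
    mixedDeriv h I (dampedGenFun l c) = dampedGenFun l
      (((X 0 - C l) ^ h * ∏ i ∈ I, (X i.succ - X 0) : MvPolynomial (Fin (D + 1)) ℝ) • c) :=
  mixedDeriv_of_intertwining (A := MvPolynomial (Fin (D + 1)) ℝ) (dampedGenFun l) _ _
    (dirDeriv_time_dampedGenFun l) (dirDeriv_space_dampedGenFun l) h I c

lemma sum_mul_mixedDeriv_dampedGenFun (p : Fin (D + 1) → ℝ) (c : geomBounded (Fin (D + 1)) R)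
    (z : (Fin D → ℝ) × ℝ) :
    ∑ k ∈ range (D + 1), ∑ I ∈ powersetCard k (univ : Finset (Fin D)), ∑ h ∈ range (D + 2 - k),
      l ^ (D + 1 - (h + k)) *
        (((D + 1 - k).choose h : ℝ) -
          (p 0 + ∑ j ∈ univ \ I, p j.succ) * ((D - k).choose h : ℝ)) *
        mixedDeriv h I (dampedGenFun l c) z =
      dampedGenFun l ((∏ i, X i - ∑ j, C (l * p j) * ∏ i ∈ univ.erase j, X i :
        MvPolynomial (Fin (D + 1)) ℝ) • c) z := by
  have hsymbol := symbol_eq_prod_sub_sum (C l) (fun j => C (p j))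
    (X : Fin (D + 1) → MvPolynomial (Fin (D + 1)) ℝ)
  have hmul (r : ℝ) (q : MvPolynomial (Fin (D + 1)) ℝ) :
      r * dampedGenFun l (q • c) z = dampedGenFun l ((C r * q) • c) z := by
    rw [mul_smul, C_smul_eq_smul, LinearMap.map_smul, Pi.smul_apply, smul_eq_mul]
  simp only [mixedDeriv_dampedGenFun, hmul, map_mul, map_sub, map_add, map_sum, map_pow,
    map_natCast, ← hsymbol, sum_smul, Finset.sum_apply]

end SimplexCoordinates

theorem stmt18_general (D : ℕ) (a l : ℝ) (p : Fin (D + 1) → ℝ) (P : ((Fin D → ℝ) × ℝ) → ℝ)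
    (hP : ∀ z, P z = a * Real.exp (-(l * z.2)) *
      ∑' n : {n : Fin (D + 1) → ℕ // ∀ i, 1 ≤ n i},
        ((∑ h, n.1 h).factorial : ℝ) *
          ∏ h, (l * p h) ^ n.1 h *
            (Fin.cons (α := fun _ => ℝ) (z.2 - ∑ i, z.1 i) z.1 h) ^ (n.1 h - 1) /
            (((n.1 h - 1).factorial : ℝ) * ((n.1 h).factorial : ℝ))) :
    ContDiff ℝ (⊤ : ℕ∞) P ∧
    ∀ z,
      ∑ k ∈ range (D + 1), ∑ I ∈ powersetCard k (univ : Finset (Fin D)),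
        ∑ h ∈ range (D + 2 - k),
          l ^ (D + 1 - (h + k)) *
            (((D + 1 - k).choose h : ℝ) -
              (p 0 + ∑ j ∈ univ \ I, p j.succ) * ((D - k).choose h : ℝ)) *
            mixedDeriv h I P z = 0 := by
  let c := (∏ i, X i : MvPolynomial (Fin (D + 1)) ℝ) • multinomialSeq fun h => l * p h
  obtain rfl : P = dampedGenFun l (a • c) := by
    ext z
    rw [hP, map_smul, Pi.smul_apply, smul_eq_mul, dampedGenFun_apply,
      expGenFun_prod_X_smul_multinomialSeq, mul_assoc]
  refine ⟨contDiff_twistedGenFun _ _ _, fun z => ?_⟩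
  rw [sum_mul_mixedDeriv_dampedGenFun, ← C_smul_eq_smul, smul_comm,
    prod_X_sub_sum_smul_multinomialSeq, smul_zero, map_zero, Pi.zero_apply]

theorem stmt18 (D : ℕ) (hD : 1 ≤ D) (l : ℝ) (hl : 0 < l)
    (p : Fin (D + 1) → ℝ) (hp : ∀ h, 0 < p h) (hpsum : ∑ h, p h = 1)
    (U : Set ((Fin D → ℝ) × ℝ))
    (hU : U = {z : (Fin D → ℝ) × ℝ | (∀ i, 0 < z.1 i) ∧ ∑ i, z.1 i < z.2})
    (P : ((Fin D → ℝ) × ℝ) → ℝ)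
    (hP : ∀ z, P z = (Real.exp (-(l * z.2)) / l) *
      ∑' n : {n : Fin (D + 1) → ℕ // ∀ i, 1 ≤ n i},
        ((∑ h, n.1 h).factorial : ℝ) *
          ∏ h, (l * p h) ^ n.1 h *
            (Fin.cons (α := fun _ => ℝ) (z.2 - ∑ i, z.1 i) z.1 h) ^ (n.1 h - 1) /
            (((n.1 h - 1).factorial : ℝ) * ((n.1 h).factorial : ℝ))) :
    ContDiffOn ℝ (⊤ : ℕ∞) P U ∧
    ∀ z ∈ U,
      ∑ k ∈ Finset.range (D + 1),
        ∑ I ∈ Finset.powersetCard k (Finset.univ : Finset (Fin D)),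
          ∑ h ∈ Finset.range (D + 2 - k),
            l ^ (D + 1 - (h + k)) *
              (((D + 1 - k).choose h : ℝ) -
                (p 0 + ∑ jj ∈ Finset.univ \ I, p jj.succ) * ((D - k).choose h : ℝ)) *
              mixedDeriv h I P z = 0 := by
  obtain ⟨hsmooth, hpde⟩ := stmt18_general D l⁻¹ l p P fun z => by rw [hP, div_eq_inv_mul]
  exact ⟨hsmooth.contDiffOn, fun z _ => hpde z⟩
end
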